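/- arXiv:2605.20091 — 2 statements merged into one kernel-verified Lean document; each statement's English description precedes it below -/
import Mathlib

section
/- Let H be a real Hilbert space, Ω a set, Φ : Ω → H a map, f ∈ H, and X ⊆ Ω a finite set. Let P_V denote the orthogonal projection onto V := span{Φ(x) : x ∈ X}, let s_{f,X} := P_V f, and define the power function P_X(x) := ‖Φ(x) − P_V Φ(x)‖ for x ∈ Ω. Then for every x ∈ Ω, |⟨f, Φ(x)⟩ − ⟨s_{f,X}, Φ(x)⟩| ≤ P_X(x) · √(‖f‖² − ‖s_{f,X}‖²) ≤ P_X(x) · ‖f‖. (In RKHS notation: |f(x) − s_{f,X}(x)| ≤ P_X(x) √(‖f‖²_H − ‖s_{f,X}‖²_H) ≤ P_X(x) ‖f‖_H.) -/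
open scoped InnerProductSpace

/-!
Since `f - P f` is orthogonal to `V`, it pairs with a vector `g` as it does with `g - P g`, so
Cauchy–Schwarz bounds the error at `g` by `‖f - P f‖ ‖g - P g‖`; by Pythagoras
`‖f - P f‖ ^ 2 = ‖f‖ ^ 2 - ‖P f‖ ^ 2`.
-/

section Projection

variable {𝕜 E : Type*} [RCLike 𝕜] [SeminormedAddCommGroup E] [InnerProductSpace 𝕜 E]

theorem sqrt_norm_sq_sub_norm_sq_of_inner_sub_eq_zero {f s : E} (h : ⟪f - s, s⟫_𝕜 = 0) :
    √(‖f‖ ^ 2 - ‖s‖ ^ 2) = ‖f - s‖ := by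
  have pythagoras : ‖f‖ ^ 2 = ‖f - s‖ ^ 2 + ‖s‖ ^ 2 := by
    simpa [h] using norm_add_sq (𝕜 := 𝕜) (f - s) s
  rw [pythagoras, add_sub_cancel_right, Real.sqrt_sq (norm_nonneg _)]

theorem norm_inner_sub_inner_le_of_inner_sub_eq_zero {f s g t : E} (h : ⟪f - s, t⟫_𝕜 = 0) :
    ‖⟪f, g⟫_𝕜 - ⟪s, g⟫_𝕜‖ ≤ ‖g - t‖ * ‖f - s‖ :=
  calc
    ‖⟪f, g⟫_𝕜 - ⟪s, g⟫_𝕜‖ = ‖⟪f - s, g - t⟫_𝕜‖ := by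
      rw [inner_sub_right, h, sub_zero, inner_sub_left]
    _ ≤ ‖f - s‖ * ‖g - t‖ := norm_inner_le_norm _ _
    _ = ‖g - t‖ * ‖f - s‖ := mul_comm _ _

theorem power_function_error_bound_general (V : Submodule 𝕜 E) (P : E → E)
    (hP_mem : ∀ u, P u ∈ V) (hP_orth : ∀ u, ∀ v ∈ V, ⟪u - P u, v⟫_𝕜 = 0) (f g : E) :
    ‖⟪f, g⟫_𝕜 - ⟪P f, g⟫_𝕜‖ ≤ ‖g - P g‖ * √(‖f‖ ^ 2 - ‖P f‖ ^ 2) ∧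
      ‖g - P g‖ * √(‖f‖ ^ 2 - ‖P f‖ ^ 2) ≤ ‖g - P g‖ * ‖f‖ := by
  constructor
  · rw [sqrt_norm_sq_sub_norm_sq_of_inner_sub_eq_zero (hP_orth f _ (hP_mem f))]
    exact norm_inner_sub_inner_le_of_inner_sub_eq_zero (hP_orth f _ (hP_mem g))
  · gcongr
    exact (Real.sqrt_le_left (norm_nonneg f)).mpr (sub_le_self _ (sq_nonneg _))

end Projection

/-- With `P` the orthogonal projection onto `V = span{Φ(x) : x ∈ X}`,
`s = P f` the kernel interpolant and `P_X(x) = ‖Φ(x) - P(Φ(x))‖` the power function,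
for every `x ∈ Ω`:
`|⟨f, Φ(x)⟩ - ⟨s, Φ(x)⟩| ≤ P_X(x) √(‖f‖² - ‖s‖²) ≤ P_X(x) ‖f‖`. -/
theorem power_function_error_bound
    {H : Type*} [NormedAddCommGroup H] [InnerProductSpace ℝ H]
    {Ω : Type*} (Φ : Ω → H) (f : H) (X : Finset Ω)
    (P : H → H)
    (hP_mem : ∀ u : H, P u ∈ Submodule.span ℝ (Φ '' ↑X))
    (hP_orth : ∀ u : H, ∀ v ∈ Submodule.span ℝ (Φ '' ↑X), ⟪u - P u, v⟫_ℝ = 0) :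
    ∀ x : Ω,
      |⟪f, Φ x⟫_ℝ - ⟪P f, Φ x⟫_ℝ| ≤
        ‖Φ x - P (Φ x)‖ * Real.sqrt (‖f‖ ^ 2 - ‖P f‖ ^ 2) ∧
      ‖Φ x - P (Φ x)‖ * Real.sqrt (‖f‖ ^ 2 - ‖P f‖ ^ 2) ≤ ‖Φ x - P (Φ x)‖ * ‖f‖ :=
  fun x ↦ power_function_error_bound_general _ P hP_mem hP_orth f (Φ x)
end

section
/- Let H be a real Hilbert space, Ω a set, Φ : Ω → H a map such that Φ(x), x ∈ X, are linearly independent for every finite X ⊆ Ω, and f : Ω → ℝ a function. Then the following are equivalent: (i) there exists g ∈ H with ⟨g, Φ(x)⟩ = f(x) for all x ∈ Ω; (ii) there exists C > 0 such that ‖s_{f,X}‖ ≤ C for every finite subset X ⊆ Ω, where s_{f,X} is the minimum-norm interpolant of f on X. Moreover, when (i) holds with representer g of minimal norm, one may take C = ‖g‖ in (ii). -/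
open scoped InnerProductSpace

/-!
A representer `g` and the interpolant `s` of its values on `X` have the same inner products with
`span (Φ '' X) ∋ s`, so `‖s‖² = ⟪g, s⟫ ≤ ‖g‖ ‖s‖`. Conversely, if the interpolants lie in a ball of
radius `C`, then any finitely many of the weak-* closed conditions `⟪g, Φ x⟫ = f x` can be met in
that ball, and by Banach-Alaoglu they can all be met at once.
-/

theorem exists_strongDual_norm_le_of_finset {𝕜 E ι : Type*} [RCLike 𝕜] [SeminormedAddCommGroup E]
    [NormedSpace 𝕜 E] {v : ι → E} {c : ι → 𝕜} {C : ℝ}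
    (h : ∀ X : Finset ι, ∃ φ : StrongDual 𝕜 E, ‖φ‖ ≤ C ∧ ∀ i ∈ X, φ (v i) = c i) :
    ∃ φ : StrongDual 𝕜 E, ‖φ‖ ≤ C ∧ ∀ i, φ (v i) = c i := by
  have hclosed (i : ι) : IsClosed {φ : WeakDual 𝕜 E | φ (v i) = c i} :=
    isClosed_eq (WeakDual.eval_continuous (v i)) continuous_const
  have hcompact := WeakDual.isCompact_closedBall (0 : StrongDual 𝕜 E) C
  obtain ⟨φ, hφ, hφv⟩ := hcompact.inter_iInter_nonempty _ hclosed fun X => by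
    obtain ⟨φ, hφ, hφv⟩ := h X
    exact ⟨StrongDual.toWeakDual φ, mem_closedBall_zero_iff.2 hφ, Set.mem_iInter₂.2 hφv⟩
  exact ⟨WeakDual.toStrongDual φ, mem_closedBall_zero_iff.1 hφ, Set.mem_iInter.1 hφv⟩

theorem exists_norm_le_inner_eq_of_finset {𝕜 H ι : Type*} [RCLike 𝕜] [NormedAddCommGroup H]
    [InnerProductSpace 𝕜 H] [CompleteSpace H] {v : ι → H} {c : ι → 𝕜} {C : ℝ}
    (h : ∀ X : Finset ι, ∃ g : H, ‖g‖ ≤ C ∧ ∀ i ∈ X, ⟪g, v i⟫_𝕜 = c i) :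
    ∃ g : H, ‖g‖ ≤ C ∧ ∀ i, ⟪g, v i⟫_𝕜 = c i := by
  have hdual (X : Finset ι) : ∃ φ : StrongDual 𝕜 H, ‖φ‖ ≤ C ∧ ∀ i ∈ X, φ (v i) = c i := by
    obtain ⟨g, hg, hgv⟩ := h X
    exact ⟨InnerProductSpace.toDual 𝕜 H g, by simpa using hg, hgv⟩
  obtain ⟨φ, hφ, hφv⟩ := exists_strongDual_norm_le_of_finset hdual
  exact ⟨(InnerProductSpace.toDual 𝕜 H).symm φ, by simpa using hφ, by simpa using hφv⟩

theorem norm_le_of_mem_span_of_inner_eq {𝕜 H : Type*} [RCLike 𝕜] [SeminormedAddCommGroup H]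
    [InnerProductSpace 𝕜 H] {S : Set H} {s g : H} (hs : s ∈ Submodule.span 𝕜 S)
    (h : ∀ v ∈ S, ⟪s, v⟫_𝕜 = ⟪g, v⟫_𝕜) : ‖s‖ ≤ ‖g‖ := by
  have hsg : ⟪s, s⟫_𝕜 = ⟪g, s⟫_𝕜 :=
    LinearMap.eqOn_span (f := (innerSL 𝕜 s).toLinearMap) (g := (innerSL 𝕜 g).toLinearMap) h hs
  have hmul : ‖s‖ * ‖s‖ ≤ ‖g‖ * ‖s‖ :=
    calc
      ‖s‖ * ‖s‖ = ‖⟪g, s⟫_𝕜‖ := by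
        rw [← hsg, ← inner_self_re_eq_norm, inner_self_eq_norm_mul_norm]
      _ ≤ ‖g‖ * ‖s‖ := norm_inner_le_norm g s
  rcases (norm_nonneg s).eq_or_lt with hzero | hpos
  · exact hzero ▸ norm_nonneg g
  · exact le_of_mul_le_mul_right hmul hpos

theorem exists_mem_span_range_inner_eq {𝕜 H ι : Type*} [RCLike 𝕜] [NormedAddCommGroup H]
    [InnerProductSpace 𝕜 H] [Finite ι] {v : ι → H} (hv : LinearIndependent 𝕜 v) (c : ι → 𝕜) :
    ∃ s ∈ Submodule.span 𝕜 (Set.range v), ∀ i, ⟪s, v i⟫_𝕜 = c i := by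
  have : FiniteDimensional 𝕜 (Submodule.span 𝕜 (Set.range v)) :=
    FiniteDimensional.span_of_finite 𝕜 (Set.finite_range v)
  let b := Module.Basis.span hv
  let ℓ := LinearMap.toContinuousLinearMap (b.constr 𝕜 c)
  let s := (InnerProductSpace.toDual 𝕜 _).symm ℓ
  refine ⟨s, s.2, fun i => ?_⟩
  calc
    ⟪(s : H), v i⟫_𝕜 = ⟪s, b i⟫_𝕜 := by
      rw [Submodule.coe_inner, Module.Basis.coe_span_apply]
    _ = ℓ (b i) := InnerProductSpace.toDual_symm_apply
    _ = c i := b.constr_basis 𝕜 c i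

/-- `s` is the minimum-norm interpolant `s_{f,X}` of `f` on `X` for the feature map `Φ`. Membership
in `span (Φ '' X)` encodes the minimality of the norm, see `IsMinNormInterpolant.norm_le`. Over `ℂ`
the interpolated values `⟪s, Φ x⟫` depend conjugate-linearly on `s`. -/
def IsMinNormInterpolant (𝕜 : Type*) {H Ω : Type*} [RCLike 𝕜] [SeminormedAddCommGroup H]
    [InnerProductSpace 𝕜 H] (Φ : Ω → H) (f : Ω → 𝕜) (X : Set Ω) (s : H) : Prop :=
  s ∈ Submodule.span 𝕜 (Φ '' X) ∧ ∀ x ∈ X, ⟪s, Φ x⟫_𝕜 = f x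

theorem IsMinNormInterpolant.norm_le {𝕜 H Ω : Type*} [RCLike 𝕜] [SeminormedAddCommGroup H]
    [InnerProductSpace 𝕜 H] {Φ : Ω → H} {f : Ω → 𝕜} {X : Set Ω} {s g : H}
    (hs : IsMinNormInterpolant 𝕜 Φ f X s) (hg : ∀ x ∈ X, ⟪g, Φ x⟫_𝕜 = f x) : ‖s‖ ≤ ‖g‖ :=
  norm_le_of_mem_span_of_inner_eq hs.1 <|
    Set.forall_mem_image.2 fun x hx => (hs.2 x hx).trans (hg x hx).symm

theorem exists_isMinNormInterpolant {𝕜 H Ω : Type*} [RCLike 𝕜] [NormedAddCommGroup H]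
    [InnerProductSpace 𝕜 H] {Φ : Ω → H} {X : Set Ω} (hX : X.Finite) (hΦ : LinearIndepOn 𝕜 Φ X)
    (f : Ω → 𝕜) : ∃ s, IsMinNormInterpolant 𝕜 Φ f X s := by
  have := hX.to_subtype
  obtain ⟨s, hs, hsf⟩ := exists_mem_span_range_inner_eq hΦ fun x : X => f x
  exact ⟨s, by rwa [Set.image_eq_range], fun x hx => hsf ⟨x, hx⟩⟩

theorem mem_rkhs_iff_bounded_interpolant_norms_general {𝕜 H Ω : Type*} [RCLike 𝕜]
    [NormedAddCommGroup H] [InnerProductSpace 𝕜 H] [CompleteSpace H] (Φ : Ω → H) (f : Ω → 𝕜)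
    (hf : ∀ X : Finset Ω, ∃ s, IsMinNormInterpolant 𝕜 Φ f X s) :
    ((∃ g : H, ∀ x, ⟪g, Φ x⟫_𝕜 = f x) ↔
      ∃ C : ℝ, 0 < C ∧ ∀ (X : Finset Ω) (s : H), IsMinNormInterpolant 𝕜 Φ f X s → ‖s‖ ≤ C) ∧
    ∀ g : H, (∀ x, ⟪g, Φ x⟫_𝕜 = f x) →
      ∀ (X : Finset Ω) (s : H), IsMinNormInterpolant 𝕜 Φ f X s → ‖s‖ ≤ ‖g‖ := by
  have hle (g : H) (hg : ∀ x, ⟪g, Φ x⟫_𝕜 = f x) (X : Finset Ω) (s : H)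
      (hs : IsMinNormInterpolant 𝕜 Φ f X s) : ‖s‖ ≤ ‖g‖ := hs.norm_le fun x _ => hg x
  refine ⟨⟨fun ⟨g, hg⟩ => ?_, fun ⟨C, _, hC⟩ => ?_⟩, hle⟩
  · exact ⟨‖g‖ + 1, by positivity, fun X s hs => (hle g hg X s hs).trans (by linarith)⟩
  · have hball (X : Finset Ω) : ∃ g : H, ‖g‖ ≤ C ∧ ∀ x ∈ X, ⟪g, Φ x⟫_𝕜 = f x := by
      obtain ⟨s, hs⟩ := hf X
      exact ⟨s, hC X s hs, hs.2⟩
    obtain ⟨g, -, hg⟩ := exists_norm_le_inner_eq_of_finset hball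
    exact ⟨g, hg⟩

/-- Assuming all finite families `Φ(x), x ∈ X` are linearly independent,
a function `f : Ω → ℝ` lies in the RKHS (i.e. has a representer `g ∈ H`) iff the norms
of its minimum-norm interpolants on finite sets are uniformly bounded; moreover, when a
minimal-norm representer `g` exists, one may take `C = ‖g‖`. -/
theorem mem_rkhs_iff_bounded_interpolant_norms
    {H : Type*} [NormedAddCommGroup H] [InnerProductSpace ℝ H] [CompleteSpace H]
    {Ω : Type*} (Φ : Ω → H)
    (hli : ∀ X : Finset Ω, LinearIndependent ℝ (fun x : X => Φ x.1))
    (f : Ω → ℝ) :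
    ((∃ g : H, ∀ x : Ω, ⟪g, Φ x⟫_ℝ = f x) ↔
      (∃ C : ℝ, 0 < C ∧ ∀ (X : Finset Ω) (s : H),
        s ∈ Submodule.span ℝ (Φ '' ↑X) →
        (∀ x ∈ X, ⟪s, Φ x⟫_ℝ = f x) → ‖s‖ ≤ C)) ∧
    (∀ g : H, (∀ x : Ω, ⟪g, Φ x⟫_ℝ = f x) →
      (∀ g' : H, (∀ x : Ω, ⟪g', Φ x⟫_ℝ = f x) → ‖g‖ ≤ ‖g'‖) →
      ∀ (X : Finset Ω) (s : H),
        s ∈ Submodule.span ℝ (Φ '' ↑X) →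
        (∀ x ∈ X, ⟪s, Φ x⟫_ℝ = f x) → ‖s‖ ≤ ‖g‖) := by
  have h := mem_rkhs_iff_bounded_interpolant_norms_general Φ f fun X =>
    exists_isMinNormInterpolant X.finite_toSet (hli X) f
  simp only [IsMinNormInterpolant, and_imp, SetLike.mem_coe] at h
  exact ⟨h.1, fun g hg _ => h.2 g hg⟩
end
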